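/- arXiv:2106.16133 — 4 statements merged into one kernel-verified Lean document; each statement's English description precedes it below -/
import Mathlib

section
/- Let a, b ≥ 1, n = a + b, and let α₁, β₁, γ₁, α₂, β₂, γ₂ ∈ ℂ. Set A = fromBlocks(α₁·I_a, 0, 0, α₂·I_b), B = fromBlocks(β₁·I_a, 0, 0, β₂·I_b), C = fromBlocks(γ₁·I_a, 0, 0, γ₂·I_b). Let X = fromBlocks(0, X₁, X₂, 0), Y = fromBlocks(0, Y₁, Y₂, 0), Z = fromBlocks(0, Z₁, Z₂, 0), where X₁, Y₁, Z₁ are a×b and X₂, Y₂, Z₂ are b×a complex matrices. Then the Hessian quadratic form of f_n(A,B,C) = Tr(A[B,C]) at the point (A,B,C), evaluated at (X,Y,Z), satisfies: Tr(X[B,Z] + X[Y,C] + A[Y,Z]) = Tr((β₁−β₂)·Z₁X₂ − (γ₁−γ₂)·Y₁X₂ − (α₁−α₂)·Z₁Y₂) + Tr((β₂−β₁)·Z₂X₁ − (γ₂−γ₁)·Y₂X₁ − (α₂−α₁)·Z₂Y₁). -/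
/-!
Multiplying out in blocks, every product of a block-scalar matrix with two off-diagonal ones is
block diagonal, so its trace is the sum of the traces of its two diagonal blocks
(`trace_fromBlocks_eq`). Both sides then become linear combinations of traces of products
such as `X₁ * Z₂`, which agree by `Tr(PQ) = Tr(QP)` for rectangular `P` and `Q`.
-/

open Matrix

theorem trace_fromBlocks_eq {m n : Type*} [Fintype m] [Fintype n]
    (P : Matrix m m ℂ) (Q : Matrix m n ℂ) (R : Matrix n m ℂ) (S : Matrix n n ℂ) :
    (Matrix.fromBlocks P Q R S).trace = P.trace + S.trace := by
  simp [Matrix.trace, Fintype.sum_sum_type]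

/-- At a block-scalar point `(A,B,C)` with
`A = fromBlocks(α₁·I, 0, 0, α₂·I)` etc., the Hessian quadratic form
`Tr(X[B,Z] + X[Y,C] + A[Y,Z])` of `f_n(A,B,C) = Tr(A[B,C])`, evaluated at off-diagonal
directions `X, Y, Z`, equals
`Tr((β₁−β₂)Z₁X₂ − (γ₁−γ₂)Y₁X₂ − (α₁−α₂)Z₁Y₂) + Tr((β₂−β₁)Z₂X₁ − (γ₂−γ₁)Y₂X₁ − (α₂−α₁)Z₂Y₁)`. -/
theorem hessian_trace_potential_block_scalar
    (a b : ℕ) (ha : 1 ≤ a) (hb : 1 ≤ b)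
    (α₁ β₁ γ₁ α₂ β₂ γ₂ : ℂ)
    (X₁ Y₁ Z₁ : Matrix (Fin a) (Fin b) ℂ)
    (X₂ Y₂ Z₂ : Matrix (Fin b) (Fin a) ℂ) :
    letI A := Matrix.fromBlocks (α₁ • (1 : Matrix (Fin a) (Fin a) ℂ)) 0 0
      (α₂ • (1 : Matrix (Fin b) (Fin b) ℂ))
    letI B := Matrix.fromBlocks (β₁ • (1 : Matrix (Fin a) (Fin a) ℂ)) 0 0
      (β₂ • (1 : Matrix (Fin b) (Fin b) ℂ))
    letI C := Matrix.fromBlocks (γ₁ • (1 : Matrix (Fin a) (Fin a) ℂ)) 0 0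
      (γ₂ • (1 : Matrix (Fin b) (Fin b) ℂ))
    letI X := Matrix.fromBlocks 0 X₁ X₂ 0
    letI Y := Matrix.fromBlocks 0 Y₁ Y₂ 0
    letI Z := Matrix.fromBlocks 0 Z₁ Z₂ 0
    Matrix.trace (X * (B * Z - Z * B) + X * (Y * C - C * Y) + A * (Y * Z - Z * Y))
      = Matrix.trace ((β₁ - β₂) • (Z₁ * X₂) - (γ₁ - γ₂) • (Y₁ * X₂)
          - (α₁ - α₂) • (Z₁ * Y₂))
        + Matrix.trace ((β₂ - β₁) • (Z₂ * X₁) - (γ₂ - γ₁) • (Y₂ * X₁)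
          - (α₂ - α₁) • (Z₂ * Y₁)) := by
  simp only [sub_eq_add_neg, Matrix.fromBlocks_neg, Matrix.fromBlocks_multiply,
    Matrix.fromBlocks_add, trace_fromBlocks_eq]
  simp only [Matrix.mul_add, Matrix.mul_neg, Matrix.smul_mul, Matrix.mul_smul,
    Matrix.one_mul, Matrix.mul_one, Matrix.zero_mul, Matrix.mul_zero, smul_zero, neg_zero,
    add_zero, zero_add, Matrix.trace_add, Matrix.trace_neg, Matrix.trace_smul, smul_eq_mul]
  -- Cyclicity of the trace pairs each `a × a` product with its `b × b` counterpart.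
  rw [Matrix.trace_mul_comm X₁ Z₂, Matrix.trace_mul_comm X₂ Z₁, Matrix.trace_mul_comm X₁ Y₂,
    Matrix.trace_mul_comm X₂ Y₁, Matrix.trace_mul_comm Y₁ Z₂, Matrix.trace_mul_comm Y₂ Z₁]
  ring
end

section
/- Let (α, β, γ) ∈ ℂ³ with (α, β, γ) ≠ (0,0,0), and let a, b ≥ 1. Let W be the complex subspace of Mat_{a×b}(ℂ)³ × Mat_{b×a}(ℂ)³ consisting of tuples (X₁, Y₁, Z₁, X₂, Y₂, Z₂) satisfying conj(α)·X₁ + conj(β)·Y₁ + conj(γ)·Z₁ = 0 and conj(α)·X₂ + conj(β)·Y₂ + conj(γ)·Z₂ = 0. Then the quadratic form q on W defined by q(X₁,Y₁,Z₁,X₂,Y₂,Z₂) = β·Tr(Z₁X₂) − γ·Tr(Y₁X₂) − α·Tr(Z₁Y₂) − β·Tr(Z₂X₁) + γ·Tr(Y₂X₁) + α·Tr(Z₂Y₁) is non-degenerate: if w ∈ W satisfies B(w, w') = 0 for all w' ∈ W, where B is the symmetric bilinear form with B(w,w) = 2·q(w), then w = 0. -/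
/-!
Write `v = (α, β, γ)`, `w₁ = (X₁, Y₁, Z₁)` and `w₂ = (X₂, Y₂, Z₂)`. The form `q` is the trace of the
triple product `(v × w₁) · w₂` up to the cyclicity of the trace, so pairing `w` with `w' = (0, w₂')`
gives `Tr ((v × w₁) · w₂')`. The componentwise conjugate transpose `w₂' = (v × w₁)ᴴ` satisfies the
constraint `conj v · w₂' = 0`, because `v · (v × w₁) = 0`; with this choice the pairing is the sum of
the squared Frobenius norms of the components of `v × w₁`, hence `v × w₁ = 0`
(`eq_zero_of_sum_trace_mul_conjTranspose`). Together with `conj v · w₁ = 0` this gives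
`|v|² w₁ = 0` (`eq_zero_of_cross_eq_zero`). The same argument with `w' = (w₁', 0)` gives `w₂ = 0`.
-/

open Matrix

/-- The quadratic form `q` appearing as the restriction of the Hessian of the trace
potential to the slice complement of the orbit directions. -/
noncomputable def hessianSliceForm (a b : ℕ) (α β γ : ℂ)
    (X₁ Y₁ Z₁ : Matrix (Fin a) (Fin b) ℂ)
    (X₂ Y₂ Z₂ : Matrix (Fin b) (Fin a) ℂ) : ℂ :=
  β * Matrix.trace (Z₁ * X₂) - γ * Matrix.trace (Y₁ * X₂) - α * Matrix.trace (Z₁ * Y₂)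
    - β * Matrix.trace (Z₂ * X₁) + γ * Matrix.trace (Y₂ * X₁)
    + α * Matrix.trace (Z₂ * Y₁)

open scoped ComplexOrder in
/-- If the squared Frobenius norms of three complex matrices sum to zero, all three vanish. -/
lemma eq_zero_of_sum_trace_mul_conjTranspose {m n : ℕ} (P Q R : Matrix (Fin m) (Fin n) ℂ)
    (h : trace (P * Pᴴ) + trace (Q * Qᴴ) + trace (R * Rᴴ) = 0) :
    P = 0 ∧ Q = 0 ∧ R = 0 := by
  have hP := (posSemidef_self_mul_conjTranspose P).trace_nonneg
  have hQ := (posSemidef_self_mul_conjTranspose Q).trace_nonneg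
  have hR := (posSemidef_self_mul_conjTranspose R).trace_nonneg
  rw [add_eq_zero_iff_of_nonneg (add_nonneg hP hQ) hR, add_eq_zero_iff_of_nonneg hP hQ] at h
  simp only [trace_mul_conjTranspose_self_eq_zero_iff] at h
  exact ⟨h.1.1, h.1.2, h.2⟩

/-- For a nonzero `v = (α, β, γ)`, a vector of matrices `w = (X, Y, Z)` with `v × w = 0` and
`conj v · w = 0` vanishes: `v × w = 0` turns `v (conj v · w)` into `|v|² w`. -/
lemma eq_zero_of_cross_eq_zero {m n : ℕ} (α β γ : ℂ)
    (hne : (α, β, γ) ≠ ((0 : ℂ), (0 : ℂ), (0 : ℂ))) (X Y Z : Matrix (Fin m) (Fin n) ℂ)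
    (h : (starRingEnd ℂ) α • X + (starRingEnd ℂ) β • Y + (starRingEnd ℂ) γ • Z = 0)
    (hX : β • Z - γ • Y = 0) (hY : γ • X - α • Z = 0) (hZ : α • Y - β • X = 0) :
    X = 0 ∧ Y = 0 ∧ Z = 0 := by
  have hN : (starRingEnd ℂ) α * α + (starRingEnd ℂ) β * β + (starRingEnd ℂ) γ * γ ≠ 0 := by
    intro h0
    apply hne
    simp only [← Complex.normSq_eq_conj_mul_self] at h0
    have h1 : Complex.normSq α + Complex.normSq β + Complex.normSq γ = 0 := by exact_mod_cast h0
    have ha := Complex.normSq_nonneg α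
    have hb := Complex.normSq_nonneg β
    have hc := Complex.normSq_nonneg γ
    rw [Complex.normSq_eq_zero.mp (by linarith : Complex.normSq α = 0),
      Complex.normSq_eq_zero.mp (by linarith : Complex.normSq β = 0),
      Complex.normSq_eq_zero.mp (by linarith : Complex.normSq γ = 0)]
  have e (i j) := congrFun (congrFun h i) j
  have eX (i j) := congrFun (congrFun hX i) j
  have eY (i j) := congrFun (congrFun hY i) j
  have eZ (i j) := congrFun (congrFun hZ i) j
  simp only [Matrix.add_apply, Matrix.sub_apply, Matrix.smul_apply, smul_eq_mul,
    Matrix.zero_apply] at e eX eY eZ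
  refine ⟨?_, ?_, ?_⟩ <;> ext i j <;> rw [Matrix.zero_apply] <;>
    refine (mul_eq_zero.mp ?_).resolve_left hN
  · linear_combination α * e i j - (starRingEnd ℂ) β * eZ i j + (starRingEnd ℂ) γ * eY i j
  · linear_combination β * e i j + (starRingEnd ℂ) α * eZ i j - (starRingEnd ℂ) γ * eX i j
  · linear_combination γ * e i j - (starRingEnd ℂ) α * eY i j + (starRingEnd ℂ) β * eX i j

/-- The conjugate transpose of `v × w` satisfies the constraint `conj v · _ = 0`. -/
lemma conj_dot_conjTranspose_cross {m n : ℕ} (α β γ : ℂ) (X Y Z : Matrix (Fin m) (Fin n) ℂ) :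
    (starRingEnd ℂ) α • (β • Z - γ • Y)ᴴ + (starRingEnd ℂ) β • (γ • X - α • Z)ᴴ
      + (starRingEnd ℂ) γ • (α • Y - β • X)ᴴ = 0 := by
  ext i j
  simp
  ring

/-- For `(α,β,γ) ≠ (0,0,0)`, the quadratic form `q` on the subspace `W` of
`Mat_{a×b}(ℂ)³ × Mat_{b×a}(ℂ)³` cut out by
`conj α · X₁ + conj β · Y₁ + conj γ · Z₁ = 0` and `conj α · X₂ + conj β · Y₂ + conj γ · Z₂ = 0`
is non-degenerate: if `w ∈ W` pairs trivially (under the symmetric bilinear form `B`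
with `B(w,w) = 2q(w)`, obtained by polarization) with every `w' ∈ W`, then `w = 0`. -/
theorem hessianSliceForm_nondegenerate
    (α β γ : ℂ) (hne : (α, β, γ) ≠ ((0 : ℂ), (0 : ℂ), (0 : ℂ)))
    (a b : ℕ) (ha : 1 ≤ a) (hb : 1 ≤ b)
    (X₁ Y₁ Z₁ : Matrix (Fin a) (Fin b) ℂ)
    (X₂ Y₂ Z₂ : Matrix (Fin b) (Fin a) ℂ)
    (h₁ : (starRingEnd ℂ) α • X₁ + (starRingEnd ℂ) β • Y₁ + (starRingEnd ℂ) γ • Z₁ = 0)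
    (h₂ : (starRingEnd ℂ) α • X₂ + (starRingEnd ℂ) β • Y₂ + (starRingEnd ℂ) γ • Z₂ = 0)
    (hpair : ∀ (X₁' Y₁' Z₁' : Matrix (Fin a) (Fin b) ℂ)
      (X₂' Y₂' Z₂' : Matrix (Fin b) (Fin a) ℂ),
      (starRingEnd ℂ) α • X₁' + (starRingEnd ℂ) β • Y₁' + (starRingEnd ℂ) γ • Z₁' = 0 →
      (starRingEnd ℂ) α • X₂' + (starRingEnd ℂ) β • Y₂' + (starRingEnd ℂ) γ • Z₂' = 0 →
      hessianSliceForm a b α β γ (X₁ + X₁') (Y₁ + Y₁') (Z₁ + Z₁')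
          (X₂ + X₂') (Y₂ + Y₂') (Z₂ + Z₂')
        - hessianSliceForm a b α β γ X₁ Y₁ Z₁ X₂ Y₂ Z₂
        - hessianSliceForm a b α β γ X₁' Y₁' Z₁' X₂' Y₂' Z₂' = 0) :
    X₁ = 0 ∧ Y₁ = 0 ∧ Z₁ = 0 ∧ X₂ = 0 ∧ Y₂ = 0 ∧ Z₂ = 0 := by
  have c₁ : β • Z₁ - γ • Y₁ = 0 ∧ γ • X₁ - α • Z₁ = 0 ∧ α • Y₁ - β • X₁ = 0 := by
    apply eq_zero_of_sum_trace_mul_conjTranspose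
    have h := hpair 0 0 0 (β • Z₁ - γ • Y₁)ᴴ (γ • X₁ - α • Z₁)ᴴ (α • Y₁ - β • X₁)ᴴ (by simp)
      (conj_dot_conjTranspose_cross α β γ X₁ Y₁ Z₁)
    generalize (β • Z₁ - γ • Y₁)ᴴ = P, (γ • X₁ - α • Z₁)ᴴ = Q, (α • Y₁ - β • X₁)ᴴ = R at h ⊢
    simp only [hessianSliceForm, add_zero, Matrix.mul_add, Matrix.add_mul, Matrix.sub_mul,
      Matrix.mul_zero, Matrix.zero_mul, smul_mul, trace_add, trace_sub, trace_smul, trace_zero,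
      smul_eq_mul, trace_mul_comm Q, trace_mul_comm R] at h ⊢
    linear_combination h
  have c₂ : β • Z₂ - γ • Y₂ = 0 ∧ γ • X₂ - α • Z₂ = 0 ∧ α • Y₂ - β • X₂ = 0 := by
    apply eq_zero_of_sum_trace_mul_conjTranspose
    have h := hpair (β • Z₂ - γ • Y₂)ᴴ (γ • X₂ - α • Z₂)ᴴ (α • Y₂ - β • X₂)ᴴ 0 0 0
      (conj_dot_conjTranspose_cross α β γ X₂ Y₂ Z₂) (by simp)
    generalize (β • Z₂ - γ • Y₂)ᴴ = P, (γ • X₂ - α • Z₂)ᴴ = Q, (α • Y₂ - β • X₂)ᴴ = R at h ⊢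
    simp only [hessianSliceForm, add_zero, Matrix.mul_add, Matrix.add_mul, Matrix.sub_mul,
      Matrix.mul_zero, Matrix.zero_mul, smul_mul, trace_add, trace_sub, trace_smul, trace_zero,
      smul_eq_mul, trace_mul_comm Q, trace_mul_comm R] at h ⊢
    linear_combination -h
  obtain ⟨x₁, y₁, z₁⟩ := eq_zero_of_cross_eq_zero α β γ hne X₁ Y₁ Z₁ h₁ c₁.1 c₁.2.1 c₁.2.2
  obtain ⟨x₂, y₂, z₂⟩ := eq_zero_of_cross_eq_zero α β γ hne X₂ Y₂ Z₂ h₂ c₂.1 c₂.2.1 c₂.2.2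
  exact ⟨x₁, y₁, z₁, x₂, y₂, z₂⟩
end

section
/- Let (α, β, γ) ∈ ℂ³ with α ≠ 0, and let a, b ≥ 1. Suppose X₁, Y₁, Z₁ ∈ Mat_{a×b}(ℂ) and X₂, Y₂, Z₂ ∈ Mat_{b×a}(ℂ) satisfy conj(α)·X₁ + conj(β)·Y₁ + conj(γ)·Z₁ = 0 and conj(α)·X₂ + conj(β)·Y₂ + conj(γ)·Z₂ = 0. Then β·Tr(Z₁X₂) − γ·Tr(Y₁X₂) − α·Tr(Z₁Y₂) − β·Tr(Z₂X₁) + γ·Tr(Y₂X₁) + α·Tr(Z₂Y₁) = ((|α|² + |β|² + |γ|²)/conj(α))·Tr(Y₁Z₂ − Y₂Z₁). -/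
open Matrix

/-- For `α ≠ 0` and tuples of matrices satisfying the conjugate-linear
constraints `conj α · X₁ + conj β · Y₁ + conj γ · Z₁ = 0` and
`conj α · X₂ + conj β · Y₂ + conj γ · Z₂ = 0`, the restricted Hessian expression reduces to
`((|α|² + |β|² + |γ|²)/conj α) · Tr(Y₁Z₂ − Y₂Z₁)`. -/
theorem hessianSliceForm_reduces_to_standard_pairing
    (α β γ : ℂ) (hα : α ≠ 0)
    (a b : ℕ) (ha : 1 ≤ a) (hb : 1 ≤ b)
    (X₁ Y₁ Z₁ : Matrix (Fin a) (Fin b) ℂ)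
    (X₂ Y₂ Z₂ : Matrix (Fin b) (Fin a) ℂ)
    (h₁ : (starRingEnd ℂ) α • X₁ + (starRingEnd ℂ) β • Y₁ + (starRingEnd ℂ) γ • Z₁ = 0)
    (h₂ : (starRingEnd ℂ) α • X₂ + (starRingEnd ℂ) β • Y₂ + (starRingEnd ℂ) γ • Z₂ = 0) :
    β * Matrix.trace (Z₁ * X₂) - γ * Matrix.trace (Y₁ * X₂)
        - α * Matrix.trace (Z₁ * Y₂) - β * Matrix.trace (Z₂ * X₁)
        + γ * Matrix.trace (Y₂ * X₁) + α * Matrix.trace (Z₂ * Y₁)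
      = ((α * (starRingEnd ℂ) α + β * (starRingEnd ℂ) β + γ * (starRingEnd ℂ) γ)
          / (starRingEnd ℂ) α) * (Matrix.trace (Y₁ * Z₂) - Matrix.trace (Y₂ * Z₁)) := by
  have hconj : (starRingEnd ℂ) α ≠ 0 := (map_ne_zero _).mpr hα
  -- Pair each constraint, through the trace, with the `Y` and `Z` components of the other triple.
  have e1 := congrArg (fun M => Matrix.trace (Z₁ * M)) h₂
  have e2 := congrArg (fun M => Matrix.trace (Y₁ * M)) h₂
  have e3 := congrArg (fun M => Matrix.trace (Z₂ * M)) h₁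
  have e4 := congrArg (fun M => Matrix.trace (Y₂ * M)) h₁
  simp only [Matrix.mul_add, Matrix.mul_smul, Matrix.trace_add, Matrix.trace_smul, smul_eq_mul,
    Matrix.mul_zero, Matrix.trace_zero] at e1 e2 e3 e4
  -- Cyclicity of the trace: afterwards the `Y₁Y₂` and `Z₁Z₂` terms cancel in the combination below.
  rw [Matrix.trace_mul_comm Z₁ Y₂] at e1 ⊢
  rw [Matrix.trace_mul_comm Z₂ Y₁, Matrix.trace_mul_comm Z₂ Z₁] at e3
  rw [Matrix.trace_mul_comm Z₂ Y₁]
  rw [Matrix.trace_mul_comm Y₂ Y₁] at e4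
  rw [div_mul_eq_mul_div, eq_div_iff hconj]
  linear_combination β * e1 - γ * e2 - β * e3 + γ * e4
end

section
/- Fix r ≥ 1, k ≥ 1 and positive integers a₁, …, a_k with n = a₁ + ⋯ + a_k. For each i, let M_i = (A_i, B_i, C_i, v₁^{(i)}, …, v_r^{(i)}) consist of linear endomorphisms A_i, B_i, C_i of ℂ^{a_i} and vectors v_j^{(i)} ∈ ℂ^{a_i}. Call a tuple (W_∞, W₁, …, W_k), where W_∞ ⊆ ℂ is a subspace and each W_i ⊆ ℂ^{a_i} is a subspace invariant under A_i, B_i and C_i such that v_j^{(i)} ∈ W_i for all i, j whenever W_∞ = ℂ, a subrepresentation; it is proper nonzero if it is neither the zero tuple nor the full tuple (ℂ, ℂ^{a₁}, …, ℂ^{a_k}). Say (M₁, …, M_k) is θ-stable, with θ = (n, −1, …, −1), if every proper nonzero subrepresentation satisfies n·dim W_∞ − Σᵢ dim W_i < 0; say a single M_i is θ_i-stable, with θ_i = (a_i, −1), if every pair (W_∞, W_i), with W_i invariant under A_i, B_i, C_i and containing all v_j^{(i)} whenever W_∞ = ℂ, which is neither zero nor all of (ℂ, ℂ^{a_i}),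 satisfies a_i·dim W_∞ − dim W_i < 0. Then: if (M₁, …, M_k) is θ-stable, each M_i is θ_i-stable. -/
/-!
A subspace of `ℂ` is `⊥` or `⊤`. If `W_∞ = ⊥`, the pairing with `θᵢ` is `-dim Wᵢ`, which is
negative because `Wᵢ ≠ ⊥`. If `W_∞ = ⊤`, extend `(⊤, Wᵢ)` by the full spaces `ℂ^{a_l}` at all
other vertices `l ≠ i`. This is a subrepresentation of the whole tuple, proper because `Wᵢ ≠ ⊤`,
and its pairing with `θ` is `n - (n - aᵢ + dim Wᵢ) = aᵢ - dim Wᵢ`, so `θ`-stability gives exactly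
the required inequality.
-/

open Matrix

/-- Representations of the quiver obtained from `k` disjoint copies of the
3-loop quiver with one `r`-fold framing vertex, with dimension vector `(1, a₁, …, a_k)`.
If the tuple `(M₁, …, M_k)` is `θ`-stable for `θ = (n, −1, …, −1)` (with `n = Σ aᵢ`),
then each `Mᵢ` is `θᵢ`-stable for `θᵢ = (aᵢ, −1)`.

A subrepresentation is a tuple `(W_∞, W₁, …, W_k)` of subspaces, each `Wᵢ` invariant
under `Aᵢ, Bᵢ, Cᵢ`, with `v_j^{(i)} ∈ Wᵢ` for all `i, j` whenever `W_∞ = ℂ`; it is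
proper nonzero when it is neither the zero tuple nor the full tuple, and stability means
that the pairing of its dimension vector with `θ` is negative. -/
theorem theta_stable_implies_componentwise_stable
    (r k : ℕ) (hr : 1 ≤ r) (hk : 1 ≤ k)
    (a : Fin k → ℕ) (ha : ∀ i, 1 ≤ a i)
    (A B C : ∀ i : Fin k, Matrix (Fin (a i)) (Fin (a i)) ℂ)
    (v : ∀ i : Fin k, Fin r → (Fin (a i) → ℂ))
    (hstab : ∀ (Winf : Submodule ℂ ℂ) (W : ∀ i : Fin k, Submodule ℂ (Fin (a i) → ℂ)),
      (∀ i, ∀ w ∈ W i, (A i).mulVec w ∈ W i) →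
      (∀ i, ∀ w ∈ W i, (B i).mulVec w ∈ W i) →
      (∀ i, ∀ w ∈ W i, (C i).mulVec w ∈ W i) →
      (Winf = ⊤ → ∀ i j, v i j ∈ W i) →
      ¬(Winf = ⊥ ∧ ∀ i, W i = ⊥) →
      ¬(Winf = ⊤ ∧ ∀ i, W i = ⊤) →
      ((∑ i, a i : ℕ) : ℤ) * (Module.finrank ℂ Winf : ℤ)
        - ∑ i, (Module.finrank ℂ (W i) : ℤ) < 0) :
    ∀ i₀ : Fin k, ∀ (Winf : Submodule ℂ ℂ) (Wi : Submodule ℂ (Fin (a i₀) → ℂ)),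
      (∀ w ∈ Wi, (A i₀).mulVec w ∈ Wi) →
      (∀ w ∈ Wi, (B i₀).mulVec w ∈ Wi) →
      (∀ w ∈ Wi, (C i₀).mulVec w ∈ Wi) →
      (Winf = ⊤ → ∀ j, v i₀ j ∈ Wi) →
      ¬(Winf = ⊥ ∧ Wi = ⊥) →
      ¬(Winf = ⊤ ∧ Wi = ⊤) →
      (a i₀ : ℤ) * (Module.finrank ℂ Winf : ℤ) - (Module.finrank ℂ Wi : ℤ) < 0 := by
  intro i₀ Winf Wi hA hB hC hv hne hnt
  rcases eq_bot_or_eq_top Winf with rfl | rfl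
  · have hWi : Wi ≠ ⊥ := fun h => hne ⟨rfl, h⟩
    have hpos : Module.finrank ℂ Wi ≠ 0 := fun h => hWi (Submodule.finrank_eq_zero.mp h)
    rw [finrank_bot]
    omega
  · have hWi : Wi ≠ ⊤ := fun h => hnt ⟨rfl, h⟩
    -- Invariance of the extension by full spaces, uniformly in the family of loops.
    have hinv : ∀ X : ∀ i : Fin k, Matrix (Fin (a i)) (Fin (a i)) ℂ,
        (∀ w ∈ Wi, (X i₀).mulVec w ∈ Wi) →
        ∀ i, ∀ w ∈ Function.update (fun i => (⊤ : Submodule ℂ (Fin (a i) → ℂ))) i₀ Wi i,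
          (X i).mulVec w ∈
            Function.update (fun i => (⊤ : Submodule ℂ (Fin (a i) → ℂ))) i₀ Wi i := by
      intro X hX i
      by_cases h : i = i₀
      · subst h
        simpa using hX
      · simp [Function.update_of_ne h]
    have key := hstab ⊤ (Function.update (fun i => ⊤) i₀ Wi)
      (hinv A hA) (hinv B hB) (hinv C hC)
      (by
        intro _ i j
        by_cases h : i = i₀
        · subst h
          simpa using hv rfl j
        · simp [Function.update_of_ne h])
      (fun h => top_ne_bot h.1)
      (fun h => hWi (by simpa using h.2 i₀))
    have hrest : ∑ i ∈ Finset.univ.erase i₀, (Module.finrank ℂ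
        (Function.update (fun i => (⊤ : Submodule ℂ (Fin (a i) → ℂ))) i₀ Wi i) : ℤ)
        = ∑ i ∈ Finset.univ.erase i₀, (a i : ℤ) := by
      refine Finset.sum_congr rfl fun i hi => ?_
      rw [Function.update_of_ne (Finset.ne_of_mem_erase hi), finrank_top]
      simp
    rw [← Finset.add_sum_erase _ a (Finset.mem_univ i₀),
      ← Finset.add_sum_erase _ _ (Finset.mem_univ i₀), hrest, Function.update_self,
      finrank_top, Module.finrank_self] at key
    rw [finrank_top, Module.finrank_self]
    push_cast at key ⊢
    linarith
end
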